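/- arXiv:math/0005054 — 5 statements merged into one kernel-verified Lean document; each statement's English description precedes it below -/
import Mathlib

section
/- Let 𝒜 be a collection of subsets of ℝⁿ, and let C be a compact subset of ℝⁿ. If for every ε > 0 there exists a packing of 𝒜 into the homothet (1+ε)C = {(1+ε)y : y ∈ C}, then there exists a packing of 𝒜 into C itself. -/
/-!
For each `k : ℕ` fix a packing of `A` into `(1 + 1/(k+1)) • C`. For a fixed nonempty `A i` its
rigid motions stay in a compact set (`exists_limit_motion`): the orthogonal group is compact, and
the translation parts are bounded because some point of `A i` is mapped into a fixed bounded set.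
Since the index type is arbitrary, a diagonal subsequence is not available; instead, limits are
taken along one nonprincipal ultrafilter on `ℕ`, which works for all indices simultaneously.

The limit motions map `A i` into `C` because `C` is closed. The interiors stay disjoint: if `p`
is interior to both `σ i '' A i` and `σ j '' A j`, with preimages `x` and `y`, then balls of some
radii `r` and `s` about `x` and `y` lie in `A i` and `A j`. The approximating motions are
surjective isometries sending `x` and `y` close to `p`, so `p` is already interior to both
approximating images (`eventually_mem_interior_image`), contradicting the packing property there.
-/

open Pointwise

noncomputable section

/-- The rigid motion `(θ, ξ)` acting on a point of `ℝⁿ`: `x ↦ ξ + θx`. -/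
def rmApply {n : ℕ} (θ : Matrix (Fin n) (Fin n) ℝ) (ξ : EuclideanSpace ℝ (Fin n))
    (x : EuclideanSpace ℝ (Fin n)) : EuclideanSpace ℝ (Fin n) :=
  ξ + (EuclideanSpace.equiv (Fin n) ℝ).symm (θ.mulVec (EuclideanSpace.equiv (Fin n) ℝ x))

/-- `(θ, ξ)` is a packing of the family `A` into the set `C`: each `θ i` is orthogonal,
each repositioned set `σᵢ(Aᵢ)` is contained in `C`, and the repositioned sets have
pairwise disjoint interiors. -/
def IsPacking {n : ℕ} {ι : Type*} (A : ι → Set (EuclideanSpace ℝ (Fin n)))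
    (θ : ι → Matrix (Fin n) (Fin n) ℝ) (ξ : ι → EuclideanSpace ℝ (Fin n))
    (C : Set (EuclideanSpace ℝ (Fin n))) : Prop :=
  (∀ i, θ i ∈ Matrix.orthogonalGroup (Fin n) ℝ) ∧
  (∀ i, rmApply (θ i) (ξ i) '' A i ⊆ C) ∧
  Pairwise fun i j =>
    interior (rmApply (θ i) (ξ i) '' A i) ∩ interior (rmApply (θ j) (ξ j) '' A j) = ∅

/-- There exists a packing of `A` into `C`. -/
def PacksInto {n : ℕ} {ι : Type*} (A : ι → Set (EuclideanSpace ℝ (Fin n)))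
    (C : Set (EuclideanSpace ℝ (Fin n))) : Prop :=
  ∃ θ ξ, IsPacking A θ ξ C

/-- A rigid motion with orthogonal linear part is a surjective isometry. -/
lemma exists_isometryEquiv_rmApply {n : ℕ} {θ : Matrix (Fin n) (Fin n) ℝ}
    (hθ : θ ∈ Matrix.orthogonalGroup (Fin n) ℝ) (ξ : EuclideanSpace ℝ (Fin n)) :
    ∃ e : EuclideanSpace ℝ (Fin n) ≃ᵢ EuclideanSpace ℝ (Fin n), ⇑e = rmApply θ ξ := by
  have hu : Matrix.toEuclideanCLM (n := Fin n) (𝕜 := ℝ) θ ∈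
      unitary (EuclideanSpace ℝ (Fin n) →L[ℝ] EuclideanSpace ℝ (Fin n)) :=
    Unitary.map_mem (Matrix.toEuclideanCLM (n := Fin n) (𝕜 := ℝ)) hθ
  refine ⟨(Unitary.linearIsometryEquiv ⟨_, hu⟩).toIsometryEquiv.trans (IsometryEquiv.addLeft ξ), ?_⟩
  funext x
  rfl

lemma isCompact_orthogonalGroup (n : ℕ) :
    IsCompact (Matrix.orthogonalGroup (Fin n) ℝ : Set (Matrix (Fin n) (Fin n) ℝ)) := by
  have hbox : IsCompact (Set.univ.pi fun _ : Fin n => Set.univ.pi fun _ : Fin n =>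
      Metric.closedBall (0 : ℝ) 1) :=
    isCompact_univ_pi fun _ => isCompact_univ_pi fun _ => isCompact_closedBall _ _
  refine hbox.of_isClosed_subset (isClosed_unitary (R := Matrix (Fin n) (Fin n) ℝ)) ?_
  intro θ hθ i _ j _
  simpa using entry_norm_bound_of_unitary hθ i j

open Filter Topology in
lemma tendsto_rmApply {n : ℕ} {α : Type*} {l : Filter α}
    {θ : α → Matrix (Fin n) (Fin n) ℝ} {ξ : α → EuclideanSpace ℝ (Fin n)}
    {θ₀ : Matrix (Fin n) (Fin n) ℝ} {ξ₀ : EuclideanSpace ℝ (Fin n)}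
    (hθ : Tendsto θ l (𝓝 θ₀)) (hξ : Tendsto ξ l (𝓝 ξ₀)) (x : EuclideanSpace ℝ (Fin n)) :
    Tendsto (fun k => rmApply (θ k) (ξ k) x) l (𝓝 (rmApply θ₀ ξ₀ x)) := by
  have hc : Continuous fun p : Matrix (Fin n) (Fin n) ℝ × EuclideanSpace ℝ (Fin n) =>
      rmApply p.1 p.2 x := by
    unfold rmApply
    fun_prop
  exact (hc.tendsto (θ₀, ξ₀)).comp (hθ.prodMk_nhds hξ)

open Filter Topology in
/-- Along an ultrafilter, rigid motions that map one fixed point into a bounded set converge. -/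
lemma exists_limit_motion {n : ℕ} {α : Type*} (U : Ultrafilter α)
    (θ : α → Matrix (Fin n) (Fin n) ℝ) (ξ : α → EuclideanSpace ℝ (Fin n))
    (hθ : ∀ k, θ k ∈ Matrix.orthogonalGroup (Fin n) ℝ) (a : EuclideanSpace ℝ (Fin n)) (R : ℝ)
    (hR : ∀ k, ‖rmApply (θ k) (ξ k) a‖ ≤ R) :
    ∃ θ₀ ∈ Matrix.orthogonalGroup (Fin n) ℝ, ∃ ξ₀,
      Tendsto θ U (𝓝 θ₀) ∧ Tendsto ξ U (𝓝 ξ₀) := by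
  obtain ⟨θ₀, hθ₀, hlim⟩ := (isCompact_orthogonalGroup n).ultrafilter_le_nhds (U.map θ)
    (le_principal_iff.2 (Eventually.of_forall hθ : ∀ᶠ k in (U : Filter α), _))
  have hb : ∀ k, ξ k ∈ Metric.closedBall (0 : EuclideanSpace ℝ (Fin n)) (R + ‖a‖) := by
    intro k
    obtain ⟨e, he⟩ := exists_isometryEquiv_rmApply (hθ k) (ξ k)
    -- The translation part is the image of the origin.
    have h0 : e 0 = ξ k := by rw [he]; simp [rmApply]
    have h1 : dist (e 0) (e a) = ‖a‖ := by rw [e.dist_eq, dist_zero_left]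
    have h2 := hR k
    rw [← he, ← dist_zero_right] at h2
    rw [Metric.mem_closedBall, ← h0]
    linarith [dist_triangle (e 0) (e a) 0]
  obtain ⟨ξ₀, -, hlim'⟩ := (isCompact_closedBall (0 : EuclideanSpace ℝ (Fin n))
    (R + ‖a‖)).ultrafilter_le_nhds (U.map ξ)
    (le_principal_iff.2 (Eventually.of_forall hb : ∀ᶠ k in (U : Filter α), _))
  exact ⟨θ₀, hθ₀, ξ₀, hlim, hlim'⟩

open Filter Topology in
/-- Interior points of the limit image are eventually interior points of the approximating
images. -/
lemma eventually_mem_interior_image {n : ℕ} {α : Type*} {l : Filter α}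
    {θ : α → Matrix (Fin n) (Fin n) ℝ} {ξ : α → EuclideanSpace ℝ (Fin n)}
    {θ₀ : Matrix (Fin n) (Fin n) ℝ} {ξ₀ : EuclideanSpace ℝ (Fin n)}
    (hθ : ∀ k, θ k ∈ Matrix.orthogonalGroup (Fin n) ℝ)
    (hθ₀ : θ₀ ∈ Matrix.orthogonalGroup (Fin n) ℝ)
    (hθl : Tendsto θ l (𝓝 θ₀)) (hξl : Tendsto ξ l (𝓝 ξ₀))
    {S : Set (EuclideanSpace ℝ (Fin n))} {p : EuclideanSpace ℝ (Fin n)}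
    (hp : p ∈ interior (rmApply θ₀ ξ₀ '' S)) :
    ∀ᶠ k in l, p ∈ interior (rmApply (θ k) (ξ k) '' S) := by
  obtain ⟨e, he⟩ := exists_isometryEquiv_rmApply hθ₀ ξ₀
  rw [← he] at hp
  have hp' : p ∈ e '' interior S := by
    have := e.toHomeomorph.image_interior S
    rw [IsometryEquiv.coe_toHomeomorph] at this
    rwa [this]
  obtain ⟨x, hx, rfl⟩ := hp'
  obtain ⟨r, hr, hball⟩ := Metric.isOpen_iff.1 isOpen_interior x hx
  have hlim := tendsto_rmApply hθl hξl x
  filter_upwards [hlim.eventually (Metric.ball_mem_nhds _ hr)] with k hk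
  obtain ⟨f, hf⟩ := exists_isometryEquiv_rmApply (hθ k) (ξ k)
  rw [← hf, ← he] at hk
  rw [← hf]
  refine interior_maximal (Set.image_mono (hball.trans interior_subset))
    (f.toHomeomorph.isOpenMap _ Metric.isOpen_ball) ?_
  rw [IsometryEquiv.coe_toHomeomorph, f.image_ball]
  exact Metric.mem_ball_comm.1 hk

/-- **Theorem 1 (first part).** If `C ⊆ ℝⁿ` is compact and for every `ε > 0` the collection
`A` can be packed into the homothet `(1+ε)C`, then `A` can be packed into `C` itself. -/
theorem packing_of_homothets {n : ℕ} {ι : Type*} (A : ι → Set (EuclideanSpace ℝ (Fin n)))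
    (C : Set (EuclideanSpace ℝ (Fin n))) (hC : IsCompact C)
    (h : ∀ ε : ℝ, 0 < ε → PacksInto A ((1 + ε) • C)) :
    PacksInto A C := by
  choose θ ξ hO hsub hdis using fun k : ℕ => h (1 / ((k : ℝ) + 1)) Nat.one_div_pos_of_nat
  let U : Ultrafilter ℕ := Filter.hyperfilter ℕ
  obtain ⟨M, hM⟩ := hC.isBounded.exists_norm_le
  have key : ∀ i, ∃ θ₀ ∈ Matrix.orthogonalGroup (Fin n) ℝ, ∃ ξ₀, (A i).Nonempty →
      Filter.Tendsto (fun k => θ k i) U (nhds θ₀) ∧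
      Filter.Tendsto (fun k => ξ k i) U (nhds ξ₀) := by
    intro i
    by_cases hne : (A i).Nonempty
    · obtain ⟨a, ha⟩ := hne
      -- All scale factors are at most `2`.
      obtain ⟨θ₀, h1, ξ₀, h2⟩ := exists_limit_motion U (fun k => θ k i) (fun k => ξ k i)
        (fun k => hO k i) a (2 * M) (by
          intro k
          obtain ⟨c, hc, hca⟩ := hsub k i ⟨a, ha, rfl⟩
          have h0 : (0 : ℝ) < 1 / ((k : ℝ) + 1) := Nat.one_div_pos_of_nat
          have h1 : 1 / ((k : ℝ) + 1) ≤ 1 := by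
            rw [div_le_one (by positivity)]
            linarith [Nat.cast_nonneg (α := ℝ) k]
          rw [← hca]
          simp only [norm_smul]
          rw [Real.norm_of_nonneg (by linarith)]
          exact mul_le_mul (by linarith) (hM c hc) (norm_nonneg _) (by norm_num))
      exact ⟨θ₀, h1, ξ₀, fun _ => h2⟩
    · exact ⟨1, one_mem _, 0, fun h' => absurd h' hne⟩
  choose θ₀ hθ₀ ξ₀ hlim using key
  refine ⟨θ₀, ξ₀, hθ₀, ?_, ?_⟩
  · rintro i _ ⟨a, ha, rfl⟩
    obtain ⟨hl1, hl2⟩ := hlim i ⟨a, ha⟩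
    have hε : Filter.Tendsto (fun k : ℕ => (1 + 1 / ((k : ℝ) + 1))⁻¹) U (nhds 1) := by
      have := (tendsto_one_div_add_atTop_nhds_zero_nat (𝕜 := ℝ)).const_add 1
      have := this.inv₀ (by norm_num)
      simp only [add_zero, inv_one] at this
      exact this.mono_left Nat.hyperfilter_le_atTop
    have hl := hε.smul (tendsto_rmApply hl1 hl2 a)
    rw [one_smul] at hl
    refine hC.isClosed.mem_of_tendsto hl (Filter.Eventually.of_forall fun k => ?_)
    have h0 : (1 + 1 / ((k : ℝ) + 1)) ≠ 0 := by positivity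
    exact (Set.mem_smul_set_iff_inv_smul_mem₀ h0 _ _).1 (hsub k i ⟨a, ha, rfl⟩)
  · intro i j hij
    rw [Set.eq_empty_iff_forall_notMem]
    rintro p ⟨hpi, hpj⟩
    obtain ⟨hi1, hi2⟩ := hlim i (Set.image_nonempty.1 ⟨p, interior_subset hpi⟩)
    obtain ⟨hj1, hj2⟩ := hlim j (Set.image_nonempty.1 ⟨p, interior_subset hpj⟩)
    obtain ⟨k, hki, hkj⟩ :=
      ((eventually_mem_interior_image (fun k => hO k i) (hθ₀ i) hi1 hi2 hpi).and
        (eventually_mem_interior_image (fun k => hO k j) (hθ₀ j) hj1 hj2 hpj)).exists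
    exact Set.eq_empty_iff_forall_notMem.1 (hdis k hij) p ⟨hki, hkj⟩
end
end

section
/- Let 𝒜 be a collection of subsets of ℝⁿ, and let C be a compact subset of ℝⁿ. If for every ε > 0 there exists a translated packing of 𝒜 into the homothet (1+ε)C = {(1+ε)y : y ∈ C}, then there exists a translated packing of 𝒜 into C itself. -/
/-!
The packing into `C` is a pointwise limit of packings into `(1 + ε) • C` as `ε → 0⁺`. If `Aᵢ` is
nonempty, compactness of `C` confines the translation vectors `ξᵢ(ε)` to a compact set, so they
converge along any ultrafilter finer than `𝓝[>] 0`; using one ultrafilter for all indices handles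
an arbitrary index type without a Tychonoff argument. Inclusion in `C` passes to the limit because
`C` is closed. Disjointness of interiors passes to the limit because a point common to two limiting
interiors satisfies the open conditions `-ξᵢ + p ∈ interior Aᵢ` and `-ξⱼ + p ∈ interior Aⱼ`, which
already hold for some `ξ(ε)`.
-/

open Pointwise

noncomputable section

/-- `ξ` is a translated packing of the family `A` into the set `C`: each translated set
`ξᵢ + Aᵢ` is contained in `C`, and the translated sets have pairwise disjoint interiors. -/
def IsTransPacking {n : ℕ} {ι : Type*} (A : ι → Set (EuclideanSpace ℝ (Fin n)))
    (ξ : ι → EuclideanSpace ℝ (Fin n)) (C : Set (EuclideanSpace ℝ (Fin n))) : Prop :=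
  (∀ i, (fun x => ξ i + x) '' A i ⊆ C) ∧
  Pairwise fun i j =>
    interior ((fun x => ξ i + x) '' A i) ∩ interior ((fun x => ξ j + x) '' A j) = ∅

/-- There exists a translated packing of `A` into `C`. -/
def TransPacksInto {n : ℕ} {ι : Type*} (A : ι → Set (EuclideanSpace ℝ (Fin n)))
    (C : Set (EuclideanSpace ℝ (Fin n))) : Prop :=
  ∃ ξ, IsTransPacking A ξ C

theorem mem_interior_translate {E : Type*} [AddGroup E] [TopologicalSpace E]
    [IsTopologicalAddGroup E] (a p : E) (S : Set E) :
    p ∈ interior ((fun x => a + x) '' S) ↔ -a + p ∈ interior S := by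
  have h := (Homeomorph.addLeft a).image_interior S
  simp only [Homeomorph.coe_addLeft] at h
  rw [← h, Set.image_add_left, Set.mem_preimage]

/-- **Theorem 1, translated-packing version.** If `C ⊆ ℝⁿ` is compact and for every
`ε > 0` the collection `A` admits a translated packing into the homothet `(1+ε)C`,
then `A` admits a translated packing into `C` itself. -/
theorem translated_packing_of_homothets {n : ℕ} {ι : Type*}
    (A : ι → Set (EuclideanSpace ℝ (Fin n)))
    (C : Set (EuclideanSpace ℝ (Fin n))) (hC : IsCompact C)
    (h : ∀ ε : ℝ, 0 < ε → TransPacksInto A ((1 + ε) • C)) :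
    TransPacksInto A C := by
  have h' : ∀ ε : ℝ, ∃ ξ, 0 < ε → IsTransPacking A ξ ((1 + ε) • C) := by
    intro ε
    by_cases hε : 0 < ε
    · obtain ⟨ξ, hξ⟩ := h ε hε
      exact ⟨ξ, fun _ => hξ⟩
    · exact ⟨0, fun h0 => absurd h0 hε⟩
  choose ξ hξ using h'
  let U : Ultrafilter ℝ := Ultrafilter.of (nhdsWithin 0 (Set.Ioi 0))
  have hU : (U : Filter ℝ) ≤ nhdsWithin 0 (Set.Ioi 0) := Ultrafilter.of_le _
  have hpos : ∀ᶠ ε in (U : Filter ℝ), 0 < ε := hU self_mem_nhdsWithin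
  have hone : Filter.Tendsto (fun ε : ℝ => 1 + ε) U (nhds 1) := by
    have h0 : Filter.Tendsto (fun ε : ℝ => ε) U (nhds 0) := hU.trans nhdsWithin_le_nhds
    simpa using h0.const_add 1
  -- Rescaling `ξ ε i + x` back by `1 + ε` gives a point of `C`.
  have hmem : ∀ i, ∀ x ∈ A i, ∀ᶠ ε in (U : Filter ℝ), (1 + ε)⁻¹ • (ξ ε i + x) ∈ C := by
    intro i x hx
    filter_upwards [hpos] with ε hε
    have hin := (hξ ε hε).1 i (Set.mem_image_of_mem _ hx)
    exact (Set.mem_smul_set_iff_inv_smul_mem₀ (by positivity) _ _).1 hin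
  -- For empty `A i` the limit need not exist, and the value of `ζ i` does not matter.
  have hlim : ∀ i, ∃ z, (A i).Nonempty → Filter.Tendsto (fun ε => ξ ε i) U (nhds z) := by
    intro i
    by_cases hA : (A i).Nonempty
    · obtain ⟨x, hx⟩ := hA
      obtain ⟨c, -, hc⟩ := hC.ultrafilter_le_nhds
        (U.map fun ε => (1 + ε)⁻¹ • (ξ ε i + x))
        (Filter.le_principal_iff.2 (hmem i x hx))
      have hc' : Filter.Tendsto (fun ε => (1 + ε)⁻¹ • (ξ ε i + x)) U (nhds c) := hc
      refine ⟨(1 : ℝ) • c - x, fun _ => ?_⟩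
      refine ((hone.smul hc').sub_const x).congr' ?_
      filter_upwards [hpos] with ε hε
      rw [smul_inv_smul₀ (by positivity), add_sub_cancel_right]
    · exact ⟨0, fun hn => absurd hn hA⟩
  choose ζ hζ using hlim
  refine ⟨ζ, ?_, ?_⟩
  · rintro i _ ⟨x, hx, rfl⟩
    have ht := (hone.inv₀ one_ne_zero).smul ((hζ i ⟨x, hx⟩).add_const x)
    rw [inv_one, one_smul] at ht
    exact hC.isClosed.mem_of_tendsto ht (hmem i x hx)
  · intro i j hij
    rw [Set.eq_empty_iff_forall_notMem]
    rintro p ⟨hi, hj⟩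
    have key : ∀ k, p ∈ interior ((fun x => ζ k + x) '' A k) →
        ∀ᶠ ε in (U : Filter ℝ), p ∈ interior ((fun x => ξ ε k + x) '' A k) := by
      intro k hk
      rw [mem_interior_translate] at hk
      simp only [mem_interior_translate]
      exact ((hζ k ⟨_, interior_subset hk⟩).neg.add_const p).eventually
        (isOpen_interior.mem_nhds hk)
    obtain ⟨ε, hε, hi', hj'⟩ := (hpos.and ((key i hi).and (key j hj))).exists
    exact Set.eq_empty_iff_forall_notMem.1 ((hξ ε hε).2 hij) p ⟨hi', hj'⟩
end
end

section
/- Let 𝒜 be a collection of subsets of ℝⁿ and V ≥ 0. If for every ε > 0 there exists a translated packing of 𝒜 into some brick of volume V + ε, then there exists a translated packing of 𝒜 into a brick of volume V. -/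
/-!
The proof is a compactness argument, with one degenerate case treated separately.

Suppose first that some coordinate `m₀` is constant on every `A i`. Then every `A i` lies in a
hyperplane and has empty interior, so disjointness of interiors is automatic. The side `m₀` of any
brick into which the family packs may then be given an arbitrary nonnegative length, and hence the
volume may be adjusted to `V` (`transPacksInto_of_flat`).

Otherwise, for each coordinate `m` some `A i` contains two points whose `m`-th coordinates differ
by some `δ m > 0`, so every brick into which the family packs has `m`-th side at least `δ m`. As the
volumes are bounded, all the sides are bounded as well (`side_le`). Translate the bricks to have a
corner at the origin and let `ε` tend to `0` along a nonprincipal ultrafilter, which gives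
simultaneous limits of all sides and all translation vectors, whatever the size of the index set.
Containment in a brick is a closed condition, and the event that the interiors of two translates
share a given point is an open condition on the translation vectors, so the limit is a packing.
-/

open Pointwise

noncomputable section

/-- The brick `[a 1, b 1] × ⋯ × [a n, b n]` in `ℝⁿ`. -/
def brick {n : ℕ} (a b : Fin n → ℝ) : Set (EuclideanSpace ℝ (Fin n)) :=
  {x | ∀ m, x m ∈ Set.Icc (a m) (b m)}

theorem mem_interior_translate_s5 {n : ℕ} (A : Set (EuclideanSpace ℝ (Fin n)))
    (ξ x : EuclideanSpace ℝ (Fin n)) :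
    x ∈ interior ((fun y => ξ + y) '' A) ↔ x - ξ ∈ interior A := by
  have e : (fun y => ξ + y) '' A = (Homeomorph.addLeft ξ) '' A := rfl
  rw [e, ← (Homeomorph.addLeft ξ).image_interior]
  constructor
  · rintro ⟨y, hy, rfl⟩
    simpa using hy
  · intro hx
    exact ⟨x - ξ, hx, by simp⟩

theorem interior_eq_empty_of_flat {n : ℕ} (A : Set (EuclideanSpace ℝ (Fin n))) (m : Fin n)
    (hA : ∀ x ∈ A, ∀ y ∈ A, x m = y m) : interior A = ∅ := by
  by_contra hne
  obtain ⟨x, hx⟩ := Set.nonempty_iff_ne_empty.2 hne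
  have hcont : Continuous fun t : ℝ => x + t • EuclideanSpace.single m (1 : ℝ) := by fun_prop
  have hmem : ∀ᶠ t in nhds (0 : ℝ), x + t • EuclideanSpace.single m (1 : ℝ) ∈ interior A := by
    apply hcont.continuousAt.eventually_mem
    simpa using isOpen_interior.mem_nhds hx
  obtain ⟨r, hr, hball⟩ := Metric.eventually_nhds_iff.1 hmem
  have h2 := hA _ (interior_subset (hball (y := r / 2) (by
    rw [Real.dist_eq, sub_zero, abs_of_pos (by positivity)]; linarith))) x (interior_subset hx)
  simp at h2
  linarith

/-- If the coordinate `m₀` is constant on each `A i`, then the side `m₀` of a brick into which `A`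
packs can be replaced by any interval `[0, t]` with `0 ≤ t`. -/
theorem transPacksInto_of_flat {n : ℕ} {ι : Type*} (A : ι → Set (EuclideanSpace ℝ (Fin n)))
    (m₀ : Fin n) (hA : ∀ i, ∀ x ∈ A i, ∀ y ∈ A i, x m₀ = y m₀) (a b : Fin n → ℝ)
    (hp : TransPacksInto A (brick a b)) (t : ℝ) (ht : 0 ≤ t) :
    TransPacksInto A (brick (Function.update a m₀ 0) (Function.update b m₀ t)) := by
  obtain ⟨ξ, hξ, -⟩ := hp
  have hc : ∀ i, ∃ c : ℝ, ∀ x ∈ A i, x m₀ = c := by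
    intro i
    rcases (A i).eq_empty_or_nonempty with h0 | ⟨y, hy⟩
    · exact ⟨0, by simp [h0]⟩
    · exact ⟨y m₀, fun x hx => hA i x hx y hy⟩
  choose c hc using hc
  refine ⟨fun i => WithLp.toLp 2 (Function.update (ξ i).ofLp m₀ (-c i)), ?_, ?_⟩
  · rintro i _ ⟨x, hx, rfl⟩ m
    by_cases hm : m = m₀
    · subst hm
      simp [hc i x hx, ht]
    · have := hξ i ⟨x, hx, rfl⟩ m
      simpa [Function.update_of_ne hm] using this
  · intro i j _
    ext x
    rw [Set.mem_inter_iff, mem_interior_translate_s5, interior_eq_empty_of_flat (A i) m₀ (hA i)]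
    simp

/-- If every factor is bounded below by a positive number, then a bound on the product bounds each
factor from above. -/
theorem side_le {n : ℕ} (δ s : Fin n → ℝ) (hδ : ∀ m, 0 < δ m) (hs : ∀ m, δ m ≤ s m) (W : ℝ)
    (hW : ∏ m, s m ≤ W) (m : Fin n) : s m ≤ W / ∏ k ∈ Finset.univ.erase m, δ k := by
  rw [le_div_iff₀ (Finset.prod_pos fun k _ => hδ k)]
  refine le_trans ?_ hW
  rw [← Finset.mul_prod_erase Finset.univ s (Finset.mem_univ m)]
  refine mul_le_mul_of_nonneg_left ?_ ((hδ m).le.trans (hs m))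
  exact Finset.prod_le_prod (fun k _ => (hδ k).le) fun k _ => hs k

theorem transPacksInto_brick_zero {n : ℕ} {ι : Type*} (A : ι → Set (EuclideanSpace ℝ (Fin n)))
    (a b : Fin n → ℝ) (hp : TransPacksInto A (brick a b)) :
    TransPacksInto A (brick 0 (b - a)) := by
  obtain ⟨ξ, hξ, hd⟩ := hp
  refine ⟨fun i => ξ i - WithLp.toLp 2 a, ?_, ?_⟩
  · rintro i _ ⟨x, hx, rfl⟩ m
    obtain ⟨h1, h2⟩ := hξ i ⟨x, hx, rfl⟩ m
    simp only [PiLp.add_apply] at h1 h2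
    constructor <;> simp <;> linarith
  · intro i j hij
    ext x
    have := Set.eq_empty_iff_forall_notMem.1 (hd hij) (x + WithLp.toLp 2 a)
    simp only [Set.mem_inter_iff, mem_interior_translate_s5] at this ⊢
    simpa [sub_sub_eq_add_sub] using this

theorem exists_ultrafilter_limit (U : Ultrafilter ℕ) (f : ℕ → ℝ) (c d : ℝ)
    (hf : ∀ k, f k ∈ Set.Icc c d) : ∃ l, Filter.Tendsto f U (nhds l) := by
  obtain ⟨l, -, hl⟩ := (isCompact_Icc (a := c) (b := d)).ultrafilter_le_nhds (U.map f) (by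
    rw [Filter.le_principal_iff]
    exact Filter.mem_map.2 (Filter.Eventually.of_forall hf))
  exact ⟨l, hl⟩

/-- A limit of packings is a packing. Translation vectors of empty sets play no role, and
convergence is only required for the others. -/
theorem isTransPacking_of_tendsto {n : ℕ} {ι : Type*} (A : ι → Set (EuclideanSpace ℝ (Fin n)))
    (U : Filter ℕ) [U.NeBot] (s : ℕ → Fin n → ℝ) (ξ : ℕ → ι → EuclideanSpace ℝ (Fin n))
    (hp : ∀ k, IsTransPacking A (ξ k) (brick 0 (s k)))
    (s' : Fin n → ℝ) (ξ' : ι → EuclideanSpace ℝ (Fin n))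
    (hs : ∀ m, Filter.Tendsto (fun k => s k m) U (nhds (s' m)))
    (hξ : ∀ i, (A i).Nonempty → Filter.Tendsto (fun k => ξ k i) U (nhds (ξ' i))) :
    IsTransPacking A ξ' (brick 0 s') := by
  constructor
  · rintro i _ ⟨x, hx, rfl⟩ m
    have hlim : Filter.Tendsto (fun k => (ξ k i + x) m) U (nhds ((ξ' i + x) m)) :=
      ((EuclideanSpace.proj (𝕜 := ℝ) m).continuous.tendsto _).comp
        ((hξ i ⟨x, hx⟩).add_const x)
    have hmem : ∀ k, (ξ k i + x) m ∈ Set.Icc ((0 : Fin n → ℝ) m) (s k m) :=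
      fun k => (hp k).1 i ⟨x, hx, rfl⟩ m
    exact ⟨ge_of_tendsto' hlim fun k => (hmem k).1, le_of_tendsto_of_tendsto' hlim (hs m)
      fun k => (hmem k).2⟩
  · intro i j hij
    rw [Set.eq_empty_iff_forall_notMem]
    rintro x ⟨hi, hj⟩
    rw [mem_interior_translate_s5] at hi hj
    have hev : ∀ l, x - ξ' l ∈ interior (A l) → ∀ᶠ k in U, x - ξ k l ∈ interior (A l) :=
      fun l hl => ((hξ l ⟨_, interior_subset hl⟩).const_sub x).eventually_mem
        (isOpen_interior.mem_nhds hl)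
    obtain ⟨k, hki, hkj⟩ := ((hev i hi).and (hev j hj)).exists
    exact Set.eq_empty_iff_forall_notMem.1 ((hp k).2 hij) x
      ⟨(mem_interior_translate_s5 _ _ _).2 hki, (mem_interior_translate_s5 _ _ _).2 hkj⟩

/-- **Theorem 2, translated-packing version.** If for every `ε > 0` there exists a
translated packing of `A` into some brick of volume `V + ε`, then there exists a
translated packing of `A` into a brick of volume `V`. -/
theorem translated_packing_of_bricks {n : ℕ} {ι : Type*}
    (A : ι → Set (EuclideanSpace ℝ (Fin n)))
    (V : ℝ) (hV : 0 ≤ V)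
    (h : ∀ ε : ℝ, 0 < ε → ∃ a b : Fin n → ℝ, (∀ m, a m ≤ b m) ∧
      (∏ m, (b m - a m)) = V + ε ∧ TransPacksInto A (brick a b)) :
    ∃ a b : Fin n → ℝ, (∀ m, a m ≤ b m) ∧
      (∏ m, (b m - a m)) = V ∧ TransPacksInto A (brick a b) := by
  by_cases hflat : ∃ m₀, ∀ i, ∀ x ∈ A i, ∀ y ∈ A i, x m₀ = y m₀
  · obtain ⟨m₀, hflat⟩ := hflat
    obtain ⟨a, b, hab, hvol, hp⟩ := h 1 one_pos
    -- The volume `V + 1` is positive, so the remaining sides have nonzero product.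
    have hP : 0 < ∏ m ∈ Finset.univ.erase m₀, (b m - a m) := by
      have h0 : 0 ≤ ∏ m ∈ Finset.univ.erase m₀, (b m - a m) :=
        Finset.prod_nonneg fun m _ => sub_nonneg.2 (hab m)
      refine h0.lt_of_ne fun h0 => ?_
      rw [← Finset.mul_prod_erase Finset.univ _ (Finset.mem_univ m₀), ← h0] at hvol
      linarith
    have ht : 0 ≤ V / ∏ m ∈ Finset.univ.erase m₀, (b m - a m) := by positivity
    refine ⟨_, _, ?_, ?_, transPacksInto_of_flat A m₀ hflat a b hp _ ht⟩
    · intro m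
      by_cases hm : m = m₀
      · subst hm
        simpa using ht
      · simpa [Function.update_of_ne hm] using hab m
    · rw [← Finset.mul_prod_erase Finset.univ _ (Finset.mem_univ m₀)]
      have hcongr : ∀ t : ℝ, ∏ m ∈ Finset.univ.erase m₀,
          (Function.update b m₀ t m - Function.update a m₀ 0 m) =
          ∏ m ∈ Finset.univ.erase m₀, (b m - a m) := by
        intro t
        refine Finset.prod_congr rfl fun m hm => ?_
        rw [Function.update_of_ne (Finset.ne_of_mem_erase hm),
          Function.update_of_ne (Finset.ne_of_mem_erase hm)]
      rw [hcongr, Function.update_self, Function.update_self, sub_zero,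
        div_mul_cancel₀ _ hP.ne']
  · have hwide : ∀ m, ∃ i, ∃ x ∈ A i, ∃ y ∈ A i, x m < y m := by
      intro m
      push Not at hflat
      obtain ⟨i, x, hx, y, hy, hne⟩ := hflat m
      rcases lt_or_gt_of_ne hne with hlt | hlt
      · exact ⟨i, x, hx, y, hy, hlt⟩
      · exact ⟨i, y, hy, x, hx, hlt⟩
    choose w p hpA q hqA hpq using hwide
    have hseq : ∀ k : ℕ, ∃ s : Fin n → ℝ, (∏ m, s m) = V + 1 / ((k : ℝ) + 1) ∧
        TransPacksInto A (brick 0 s) := by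
      intro k
      obtain ⟨a, b, -, hvol, hp⟩ := h (1 / ((k : ℝ) + 1)) (by positivity)
      exact ⟨b - a, hvol, transPacksInto_brick_zero A a b hp⟩
    choose s hvol ξ hξ using hseq
    have hlow : ∀ k m, q m m - p m m ≤ s k m := by
      intro k m
      have h1 := ((hξ k).1 (w m) ⟨p m, hpA m, rfl⟩ m).1
      have h2 := ((hξ k).1 (w m) ⟨q m, hqA m, rfl⟩ m).2
      simp only [PiLp.add_apply, Pi.zero_apply] at h1 h2
      linarith
    have hbdd : ∀ m, ∃ M, ∀ k, s k m ≤ M := by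
      intro m
      refine ⟨_, fun k => side_le (fun m => q m m - p m m) (s k) (fun m => sub_pos.2 (hpq m))
        (hlow k) (V + 1) ?_ m⟩
      rw [hvol]
      have : 1 / ((k : ℝ) + 1) ≤ 1 := by
        rw [div_le_one (by positivity)]
        linarith [(Nat.cast_nonneg k : (0 : ℝ) ≤ k)]
      linarith
    choose M hM using hbdd
    let U : Ultrafilter ℕ := Filter.hyperfilter ℕ
    have hs0 : ∀ k m, 0 ≤ s k m := fun k m => (sub_pos.2 (hpq m)).le.trans (hlow k m)
    have hslim : ∀ m, ∃ l, Filter.Tendsto (fun k => s k m) U (nhds l) :=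
      fun m => exists_ultrafilter_limit U _ 0 (M m) fun k => ⟨hs0 k m, hM m k⟩
    choose s' hs' using hslim
    have hξlim : ∀ i, ∃ l : EuclideanSpace ℝ (Fin n), (A i).Nonempty →
        Filter.Tendsto (fun k => ξ k i) U (nhds l) := by
      intro i
      by_cases hne : (A i).Nonempty
      · obtain ⟨x, hx⟩ := hne
        have hcoord : ∀ m, ∃ l, Filter.Tendsto (fun k => ξ k i m) U (nhds l) := by
          intro m
          refine exists_ultrafilter_limit U _ (-x m) (M m - x m) fun k => ?_
          obtain ⟨h1, h2⟩ := (hξ k).1 i ⟨x, hx, rfl⟩ m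
          simp only [PiLp.add_apply, Pi.zero_apply] at h1 h2
          have := hM m k
          constructor <;> linarith
        choose l hl using hcoord
        refine ⟨WithLp.toLp 2 l, fun _ => ?_⟩
        exact ((PiLp.continuous_toLp 2 _).tendsto l).comp (tendsto_pi_nhds.2 hl)
      · exact ⟨0, fun h => absurd h hne⟩
    choose ξ' hξ' using hξlim
    refine ⟨0, s', fun m => ge_of_tendsto' (hs' m) fun k => hs0 k m, ?_, ξ',
      isTransPacking_of_tendsto A U s ξ hξ s' ξ' hs' hξ'⟩
    simp only [Pi.zero_apply, sub_zero]
    have hlim1 : Filter.Tendsto (fun k => ∏ m, s k m) U (nhds (∏ m, s' m)) :=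
      tendsto_finsetProd _ fun m _ => hs' m
    have hlim2 : Filter.Tendsto (fun k => ∏ m, s k m) U (nhds V) := by
      simp only [hvol]
      have := (tendsto_one_div_add_atTop_nhds_zero_nat (𝕜 := ℝ)).const_add V
      rw [add_zero] at this
      exact this.mono_left (Nat.hyperfilter_le_atTop)
    exact tendsto_nhds_unique hlim1 hlim2
end
end

section
/- Let 𝒜 = {A_1, A_2, …} be the collection of closed rectangles in ℝ² where A_i has dimensions (1/i) × (1/(i+1)) for i ≥ 1. Suppose that for every ε > 0 the collection 𝒜 can be packed into a square of area 1 + ε. Then there exists a packing of 𝒜 into a square of area 1 such that the complement, within that square, of the union of the packed rectangles has Lebesgue measure zero (i.e., 𝒜 tiles a square of area 1). -/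
/-!
The proof is a compactness argument followed by a comparison of areas.

For each `k` choose a packing into a square of side `s k` with `s k ^ 2 = 1 + 1 / (k + 1)`. The
orthogonal matrices form a compact set, and each translation part lies in a fixed square because
every rectangle contains the origin. Hence, along one ultrafilter on the indices `k`, the motions
of each single rectangle converge (`exists_limit_motion`). The limit motions are orthogonal and
map the rectangles into the unit square since `s k → 1` (`limit_mem_rect`). Interiors remain
disjoint (`limit_disjoint`): a point `y` common to two limit interiors is pulled back into the two
open rectangles by the limit motions, hence also by the approximating motions for some `k`, as the
inverse motion depends continuously on the motion.

Finally, rigid motions preserve area and the frontier of a rectangle is a null set, so the placed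
rectangles are almost everywhere disjoint. Their areas sum to `∑ 1 / ((i + 1) (i + 2)) = 1`, which
is the area of the square that contains them, so the complement is null.
-/

open Pointwise

noncomputable section

/-- The closed axis-aligned rectangle `[0, w] × [0, h]` in `ℝ²`. -/
def rect (w h : ℝ) : Set (EuclideanSpace ℝ (Fin 2)) :=
  {x | x 0 ∈ Set.Icc 0 w ∧ x 1 ∈ Set.Icc 0 h}

/-- The collection of rectangles of dimensions `1 × (1/2)`, `(1/2) × (1/3)`,
`(1/3) × (1/4)`, …: the `i`-th set (for `i : ℕ`) has dimensions `(1/(i+1)) × (1/(i+2))`. -/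
def moserRects : ℕ → Set (EuclideanSpace ℝ (Fin 2)) :=
  fun i => rect (1 / ((i : ℝ) + 1)) (1 / ((i : ℝ) + 2))

open MeasureTheory Filter Topology

/-! ### Rigid motions -/

/-- The inverse motion `y ↦ θᵀ (y - ξ)` of `rmApply θ ξ`, for orthogonal `θ`. -/
def rmInv {n : ℕ} (θ : Matrix (Fin n) (Fin n) ℝ) (ξ : EuclideanSpace ℝ (Fin n))
    (y : EuclideanSpace ℝ (Fin n)) : EuclideanSpace ℝ (Fin n) :=
  rmApply θ.transpose 0 (y - ξ)

lemma continuous_rmApply {n : ℕ} : Continuous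
    fun p : Matrix (Fin n) (Fin n) ℝ × EuclideanSpace ℝ (Fin n) × EuclideanSpace ℝ (Fin n) =>
      rmApply p.1 p.2.1 p.2.2 := by
  unfold rmApply
  have h1 : Continuous fun p : Matrix (Fin n) (Fin n) ℝ × EuclideanSpace ℝ (Fin n) ×
      EuclideanSpace ℝ (Fin n) => p.1.mulVec (EuclideanSpace.equiv (Fin n) ℝ p.2.2) :=
    continuous_fst.matrix_mulVec
      ((EuclideanSpace.equiv (Fin n) ℝ).continuous.comp continuous_snd.snd)
  exact continuous_snd.fst.add ((EuclideanSpace.equiv (Fin n) ℝ).symm.continuous.comp h1)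

lemma continuous_rmInv {n : ℕ} (y : EuclideanSpace ℝ (Fin n)) : Continuous
    fun p : Matrix (Fin n) (Fin n) ℝ × EuclideanSpace ℝ (Fin n) => rmInv p.1 p.2 y := by
  unfold rmInv
  exact continuous_rmApply.comp
    (continuous_fst.matrix_transpose.prodMk
      (continuous_const.prodMk (continuous_const.sub continuous_snd)))

lemma rmInv_rmApply {n : ℕ} {θ : Matrix (Fin n) (Fin n) ℝ}
    (hθ : θ ∈ Matrix.orthogonalGroup (Fin n) ℝ) (ξ x : EuclideanSpace ℝ (Fin n)) :
    rmInv θ ξ (rmApply θ ξ x) = x := by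
  have h : θ.transpose * θ = 1 := (Matrix.mem_orthogonalGroup_iff' _ _).1 hθ
  simp only [rmInv, rmApply, add_sub_cancel_left, zero_add,
    ContinuousLinearEquiv.apply_symm_apply, Matrix.mulVec_mulVec, h, Matrix.one_mulVec,
    ContinuousLinearEquiv.symm_apply_apply]

lemma rmApply_rmInv {n : ℕ} {θ : Matrix (Fin n) (Fin n) ℝ}
    (hθ : θ ∈ Matrix.orthogonalGroup (Fin n) ℝ) (ξ x : EuclideanSpace ℝ (Fin n)) :
    rmApply θ ξ (rmInv θ ξ x) = x := by
  have h : θ * θ.transpose = 1 := (Matrix.mem_orthogonalGroup_iff _ _).1 hθ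
  simp only [rmInv, rmApply, zero_add, ContinuousLinearEquiv.apply_symm_apply,
    Matrix.mulVec_mulVec, h, Matrix.one_mulVec, ContinuousLinearEquiv.symm_apply_apply,
    add_sub_cancel]

/-- The rigid motion `rmApply θ ξ` as a homeomorphism. -/
def rmHomeo {n : ℕ} {θ : Matrix (Fin n) (Fin n) ℝ}
    (hθ : θ ∈ Matrix.orthogonalGroup (Fin n) ℝ) (ξ : EuclideanSpace ℝ (Fin n)) :
    EuclideanSpace ℝ (Fin n) ≃ₜ EuclideanSpace ℝ (Fin n) where
  toFun := rmApply θ ξ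
  invFun := rmInv θ ξ
  left_inv := rmInv_rmApply hθ ξ
  right_inv := rmApply_rmInv hθ ξ
  continuous_toFun := continuous_rmApply.comp
    (continuous_const.prodMk (continuous_const.prodMk continuous_id))
  continuous_invFun := continuous_rmApply.comp
    (continuous_const.prodMk (continuous_const.prodMk (continuous_id.sub continuous_const)))

lemma mem_interior_image_iff {n : ℕ} {θ : Matrix (Fin n) (Fin n) ℝ}
    (hθ : θ ∈ Matrix.orthogonalGroup (Fin n) ℝ) (ξ y : EuclideanSpace ℝ (Fin n))
    (S : Set (EuclideanSpace ℝ (Fin n))) :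
    y ∈ interior (rmApply θ ξ '' S) ↔ rmInv θ ξ y ∈ interior S := by
  change y ∈ interior (rmHomeo hθ ξ '' S) ↔ (rmHomeo hθ ξ).symm y ∈ interior S
  rw [← (rmHomeo hθ ξ).image_interior, Homeomorph.image_eq_preimage_symm]
  rfl

/-- Rigid motions preserve Lebesgue measure, because `|det θ| = 1`. -/
lemma volume_image {n : ℕ} {θ : Matrix (Fin n) (Fin n) ℝ}
    (hθ : θ ∈ Matrix.orthogonalGroup (Fin n) ℝ) (ξ : EuclideanSpace ℝ (Fin n))
    (S : Set (EuclideanSpace ℝ (Fin n))) : volume (rmApply θ ξ '' S) = volume S := by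
  have h : rmApply θ ξ '' S = (fun x => ξ + x) '' (Matrix.toEuclideanLin θ '' S) := by
    rw [Set.image_image]
    rfl
  have hd : LinearMap.det (Matrix.toEuclideanLin θ) = θ.det := by
    rw [Matrix.toEuclideanLin, Matrix.toLpLin_eq_toLin, LinearMap.det_toLin]
  have hd2 : |θ.det| = 1 := by
    have h1 := congrArg Matrix.det ((Matrix.mem_orthogonalGroup_iff _ _).1 hθ)
    rw [Matrix.det_mul, Matrix.det_transpose, Matrix.det_one] at h1
    rcases mul_self_eq_one_iff.1 h1 with h | h <;> simp [h]
  rw [h, Set.image_add_left, measure_preimage_add, Measure.addHaar_image_linearMap, hd, hd2]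
  simp

/-! ### Rectangles -/

lemma rect_eq_preimage (w h : ℝ) :
    rect w h = WithLp.ofLp ⁻¹' (Set.Icc ![0, 0] ![w, h]) := by
  ext x
  simp [rect, Set.mem_Icc, Pi.le_def, Fin.forall_fin_two]
  tauto

lemma isClosed_rect (w h : ℝ) : IsClosed (rect w h) := by
  rw [rect_eq_preimage]
  exact isClosed_Icc.preimage (PiLp.continuous_ofLp 2 _)

lemma isCompact_rect (w h : ℝ) : IsCompact (rect w h) := by
  rw [rect_eq_preimage]
  exact (PiLp.homeomorph 2 (fun _ : Fin 2 => ℝ)).isCompact_preimage.2 isCompact_Icc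

lemma convex_rect (w h : ℝ) : Convex ℝ (rect w h) := by
  rw [rect_eq_preimage]
  exact (convex_Icc _ _).linear_preimage (WithLp.linearEquiv 2 ℝ (Fin 2 → ℝ)).toLinearMap

lemma volume_rect {w h : ℝ} (hw : 0 ≤ w) : volume (rect w h) = ENNReal.ofReal (w * h) := by
  rw [rect_eq_preimage, (PiLp.volume_preserving_ofLp (Fin 2)).measure_preimage
    measurableSet_Icc.nullMeasurableSet, Real.volume_Icc_pi]
  simp [ENNReal.ofReal_mul hw]

lemma volume_moserRects (i : ℕ) :
    volume (moserRects i) = ENNReal.ofReal (1 / ((i : ℝ) + 1) - 1 / ((i : ℝ) + 2)) := by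
  rw [moserRects, volume_rect (by positivity)]
  congr 1
  field_simp
  ring

/-- The areas telescope. -/
lemma tsum_volume_moserRects : ∑' i, volume (moserRects i) = 1 := by
  have hnn : ∀ i : ℕ, 0 ≤ 1 / ((i : ℝ) + 1) - 1 / ((i : ℝ) + 2) := fun i => by
    rw [sub_nonneg]
    gcongr
    norm_num
  have hsum : HasSum (fun i : ℕ => 1 / ((i : ℝ) + 1) - 1 / ((i : ℝ) + 2)) 1 := by
    rw [hasSum_iff_tendsto_nat_of_nonneg hnn]
    have hp : ∀ n : ℕ, ∑ i ∈ Finset.range n, (1 / ((i : ℝ) + 1) - 1 / ((i : ℝ) + 2))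
        = 1 - 1 / ((n : ℝ) + 1) := fun n => by
      induction n with
      | zero => simp
      | succ k ih =>
        rw [Finset.sum_range_succ, ih]
        push_cast
        ring
    simp_rw [hp]
    simpa using (tendsto_const_nhds (x := (1 : ℝ))).sub
      (tendsto_one_div_add_atTop_nhds_zero_nat (𝕜 := ℝ))
  simp_rw [volume_moserRects]
  rw [← ENNReal.ofReal_tsum_of_nonneg hnn hsum.summable, hsum.tsum_eq, ENNReal.ofReal_one]

lemma isClosed_moserRects (i : ℕ) : IsClosed (moserRects i) := isClosed_rect _ _

lemma volume_frontier_moserRects (i : ℕ) : volume (frontier (moserRects i)) = 0 :=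
  (convex_rect _ _).addHaar_frontier volume

/-! ### Limits of packings -/

lemma isClosed_orthogonal {n : ℕ} :
    IsClosed (Matrix.orthogonalGroup (Fin n) ℝ : Set (Matrix (Fin n) (Fin n) ℝ)) := by
  have : (Matrix.orthogonalGroup (Fin n) ℝ : Set (Matrix (Fin n) (Fin n) ℝ))
      = {θ | θ * θ.transpose = 1} := by
    ext θ
    exact Matrix.mem_orthogonalGroup_iff _ _
  rw [this]
  exact isClosed_eq (continuous_id.matrix_mul continuous_id.matrix_transpose) continuous_const

lemma isCompact_orthogonal {n : ℕ} :
    IsCompact (Matrix.orthogonalGroup (Fin n) ℝ : Set (Matrix (Fin n) (Fin n) ℝ)) := by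
  have hK : IsCompact (Set.pi Set.univ fun _ : Fin n => Set.pi Set.univ fun _ : Fin n =>
      Set.Icc (-1 : ℝ) 1) :=
    isCompact_univ_pi fun _ => isCompact_univ_pi fun _ => isCompact_Icc
  refine IsCompact.of_isClosed_subset hK isClosed_orthogonal fun θ hθ i _ j _ => ?_
  exact abs_le.1 (entry_norm_bound_of_unitary hθ i j)

/-- Motions mapping the origin into a fixed square have a limit along any ultrafilter. -/
lemma exists_limit_motion_s6 (u : Ultrafilter ℕ) (θ : ℕ → Matrix (Fin 2) (Fin 2) ℝ)
    (ξ : ℕ → EuclideanSpace ℝ (Fin 2)) (hθ : ∀ k, θ k ∈ Matrix.orthogonalGroup (Fin 2) ℝ)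
    (hξ : ∀ k, ξ k ∈ rect 2 2) :
    ∃ p : Matrix (Fin 2) (Fin 2) ℝ × EuclideanSpace ℝ (Fin 2),
      p.1 ∈ Matrix.orthogonalGroup (Fin 2) ℝ ∧ Tendsto (fun k => (θ k, ξ k)) u (𝓝 p) := by
  obtain ⟨p, hp, hlim⟩ := (isCompact_orthogonal.prod (isCompact_rect 2 2)).ultrafilter_le_nhds'
    (u.map fun k => (θ k, ξ k)) (Filter.mem_map.2 (Filter.univ_mem' fun k => ⟨hθ k, hξ k⟩))
  exact ⟨p, hp.1, hlim⟩

lemma limit_mem_rect {l : Filter ℕ} [l.NeBot] {s : ℕ → ℝ} (hs : Tendsto s l (𝓝 1))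
    {f : ℕ → EuclideanSpace ℝ (Fin 2)} {y : EuclideanSpace ℝ (Fin 2)} (hf : Tendsto f l (𝓝 y))
    (hmem : ∀ k, f k ∈ rect (s k) (s k)) : y ∈ rect 1 1 := by
  have hc : ∀ i : Fin 2, Tendsto (fun k => f k i) l (𝓝 (y i)) := fun i =>
    ((EuclideanSpace.proj i : EuclideanSpace ℝ (Fin 2) →L[ℝ] ℝ).continuous.tendsto y).comp hf
  exact ⟨⟨ge_of_tendsto' (hc 0) fun k => (hmem k).1.1,
      le_of_tendsto_of_tendsto' (hc 0) hs fun k => (hmem k).1.2⟩,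
    ⟨ge_of_tendsto' (hc 1) fun k => (hmem k).2.1,
      le_of_tendsto_of_tendsto' (hc 1) hs fun k => (hmem k).2.2⟩⟩

/-- If a point is interior to the image of `S` under a limit motion, then it is interior to the
image of `S` under nearby motions. -/
lemma eventually_mem_interior {n : ℕ} {l : Filter ℕ} {θ : ℕ → Matrix (Fin n) (Fin n) ℝ}
    {ξ : ℕ → EuclideanSpace ℝ (Fin n)} (hθ : ∀ k, θ k ∈ Matrix.orthogonalGroup (Fin n) ℝ)
    {p : Matrix (Fin n) (Fin n) ℝ × EuclideanSpace ℝ (Fin n)}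
    (hp : p.1 ∈ Matrix.orthogonalGroup (Fin n) ℝ)
    (hlim : Tendsto (fun k => (θ k, ξ k)) l (𝓝 p)) {S : Set (EuclideanSpace ℝ (Fin n))}
    {y : EuclideanSpace ℝ (Fin n)} (hy : y ∈ interior (rmApply p.1 p.2 '' S)) :
    ∀ᶠ k in l, y ∈ interior (rmApply (θ k) (ξ k) '' S) := by
  rw [mem_interior_image_iff hp] at hy
  have h := ((continuous_rmInv y).tendsto p).comp hlim
  filter_upwards [h.eventually (isOpen_interior.mem_nhds hy)] with k hk
  exact (mem_interior_image_iff (hθ k) _ _ _).2 hk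

lemma limit_disjoint {n : ℕ} {l : Filter ℕ} [l.NeBot]
    {θ θ' : ℕ → Matrix (Fin n) (Fin n) ℝ} {ξ ξ' : ℕ → EuclideanSpace ℝ (Fin n)}
    (hθ : ∀ k, θ k ∈ Matrix.orthogonalGroup (Fin n) ℝ)
    (hθ' : ∀ k, θ' k ∈ Matrix.orthogonalGroup (Fin n) ℝ)
    {p p' : Matrix (Fin n) (Fin n) ℝ × EuclideanSpace ℝ (Fin n)}
    (hp : p.1 ∈ Matrix.orthogonalGroup (Fin n) ℝ) (hp' : p'.1 ∈ Matrix.orthogonalGroup (Fin n) ℝ)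
    (hlim : Tendsto (fun k => (θ k, ξ k)) l (𝓝 p))
    (hlim' : Tendsto (fun k => (θ' k, ξ' k)) l (𝓝 p')) {S S' : Set (EuclideanSpace ℝ (Fin n))}
    (hd : ∀ k, interior (rmApply (θ k) (ξ k) '' S) ∩ interior (rmApply (θ' k) (ξ' k) '' S') = ∅) :
    interior (rmApply p.1 p.2 '' S) ∩ interior (rmApply p'.1 p'.2 '' S') = ∅ := by
  refine Set.eq_empty_of_forall_notMem fun y hy => ?_
  obtain ⟨k, h1, h2⟩ := ((eventually_mem_interior hθ hp hlim hy.1).and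
    (eventually_mem_interior hθ' hp' hlim' hy.2)).exists
  exact Set.notMem_empty y (hd k ▸ ⟨h1, h2⟩)

/-! ### Comparison of areas -/

/-- A packing of the rectangles into the unit square leaves only a null set uncovered. -/
lemma volume_compl_of_packing {θ : ℕ → Matrix (Fin 2) (Fin 2) ℝ}
    {ξ : ℕ → EuclideanSpace ℝ (Fin 2)} (hpack : IsPacking moserRects θ ξ (rect 1 1)) :
    volume (rect 1 1 \ ⋃ i, rmApply (θ i) (ξ i) '' moserRects i) = 0 := by
  obtain ⟨hθ, hsub, hdisj⟩ := hpack
  have hclosed : ∀ i, IsClosed (rmApply (θ i) (ξ i) '' moserRects i) := fun i =>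
    (rmHomeo (hθ i) (ξ i)).isClosedMap _ (isClosed_moserRects i)
  have hfront : ∀ i, volume (frontier (rmApply (θ i) (ξ i) '' moserRects i)) = 0 := fun i => by
    have h : frontier (rmApply (θ i) (ξ i) '' moserRects i)
        = rmApply (θ i) (ξ i) '' frontier (moserRects i) :=
      ((rmHomeo (hθ i) (ξ i)).image_frontier _).symm
    rw [h, volume_image (hθ i), volume_frontier_moserRects]
  have hae : Pairwise (Function.onFun (AEDisjoint volume)
      fun i => rmApply (θ i) (ξ i) '' moserRects i) := fun i j hij => by
    refine measure_mono_null ?_ (measure_union_null (hfront i) (hfront j))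
    rintro y ⟨hi, hj⟩
    rw [(hclosed i).frontier_eq, (hclosed j).frontier_eq]
    by_cases h : y ∈ interior (rmApply (θ i) (ξ i) '' moserRects i)
    · exact Or.inr ⟨hj, fun h' => Set.notMem_empty y (hdisj hij ▸ ⟨h, h'⟩)⟩
    · exact Or.inl ⟨hi, h⟩
  have hunion : volume (⋃ i, rmApply (θ i) (ξ i) '' moserRects i) = 1 := by
    rw [measure_iUnion₀ hae fun i => (hclosed i).measurableSet.nullMeasurableSet]
    simp_rw [volume_image (hθ _)]
    exact tsum_volume_moserRects
  rw [measure_sdiff (Set.iUnion_subset hsub)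
    (MeasurableSet.iUnion fun i => (hclosed i).measurableSet).nullMeasurableSet
    (by rw [hunion]; exact ENNReal.one_ne_top), hunion, volume_rect zero_le_one]
  simp

/-- **Corollary 1.** If for every `ε > 0` the rectangles of dimensions `1 × (1/2)`,
`(1/2) × (1/3)`, … can be packed into a square of area `1 + ε`, then they tile a square
of area `1`: there is a packing into the unit square whose complement in that square has
Lebesgue measure zero. -/
theorem moser_rectangles_tile_square
    (h : ∀ ε : ℝ, 0 < ε → ∃ s : ℝ, 0 ≤ s ∧ s ^ 2 = 1 + ε ∧
      PacksInto moserRects (rect s s)) :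
    ∃ (θ : ℕ → Matrix (Fin 2) (Fin 2) ℝ) (ξ : ℕ → EuclideanSpace ℝ (Fin 2)),
      IsPacking moserRects θ ξ (rect 1 1) ∧
      MeasureTheory.volume
        (rect 1 1 \ ⋃ i, rmApply (θ i) (ξ i) '' moserRects i) = 0 := by
  choose s hs0 hs2 hs using fun k : ℕ => h (1 / ((k : ℝ) + 1)) (by positivity)
  choose θ ξ hpack using hs
  have hs_le : ∀ k, s k ≤ 2 := fun k => by
    have h1 : 1 / ((k : ℝ) + 1) ≤ 1 := by
      rw [div_le_one (by positivity)]
      linarith [(Nat.cast_nonneg k : (0 : ℝ) ≤ k)]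
    nlinarith [hs2 k, hs0 k]
  have hs_lim : Tendsto s atTop (𝓝 1) := by
    have h1 : Tendsto (fun k : ℕ => Real.sqrt (1 + 1 / ((k : ℝ) + 1))) atTop (𝓝 1) := by
      simpa using ((tendsto_one_div_add_atTop_nhds_zero_nat (𝕜 := ℝ)).const_add 1).sqrt
    refine h1.congr fun k => ?_
    rw [← hs2 k, Real.sqrt_sq (hs0 k)]
  -- Every rectangle contains the origin, which is mapped to the translation part of the motion.
  have hξ : ∀ i k, ξ k i ∈ rect 2 2 := fun i k => by
    have h0 : (0 : EuclideanSpace ℝ (Fin 2)) ∈ moserRects i := by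
      simp only [moserRects, rect, Set.mem_ofPred_eq, PiLp.zero_apply, Set.mem_Icc]
      refine ⟨⟨le_rfl, ?_⟩, le_rfl, ?_⟩ <;> positivity
    have h1 := (hpack k).2.1 i ⟨0, h0, rfl⟩
    have h2 : rmApply (θ k i) (ξ k i) 0 = ξ k i := by simp [rmApply]
    rw [h2] at h1
    exact ⟨⟨h1.1.1, h1.1.2.trans (hs_le k)⟩, ⟨h1.2.1, h1.2.2.trans (hs_le k)⟩⟩
  let u : Ultrafilter ℕ := hyperfilter ℕ
  have hu : (u : Filter ℕ) ≤ atTop := Nat.hyperfilter_le_atTop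
  choose p hp hlim using fun i => exists_limit_motion_s6 u (fun k => θ k i) (fun k => ξ k i)
    (fun k => (hpack k).1 i) (hξ i)
  have hP : IsPacking moserRects (fun i => (p i).1) (fun i => (p i).2) (rect 1 1) := by
    refine ⟨hp, fun i => ?_, fun i j hij => ?_⟩
    · rintro _ ⟨x, hx, rfl⟩
      have hcont : Continuous fun q : Matrix (Fin 2) (Fin 2) ℝ × EuclideanSpace ℝ (Fin 2) =>
          rmApply q.1 q.2 x :=
        continuous_rmApply.comp (continuous_fst.prodMk (continuous_snd.prodMk continuous_const))
      exact limit_mem_rect (hs_lim.mono_left hu) ((hcont.tendsto (p i)).comp (hlim i))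
        fun k => (hpack k).2.1 i ⟨x, hx, rfl⟩
    · exact limit_disjoint (fun k => (hpack k).1 i) (fun k => (hpack k).1 j) (hp i) (hp j)
        (hlim i) (hlim j) fun k => (hpack k).2.2 hij
  exact ⟨_, _, hP, volume_compl_of_packing hP⟩
end
end

section
/- Let A be a subset of ℝⁿ containing the origin, with finite diameter diam A. Let B = [0,b_1] × ⋯ × [0,b_n] be a brick, and suppose σ = (θ,ξ) ∈ O(n) × ℝⁿ satisfies σ(A) ⊆ B. Then there exists ξ' ∈ ℝⁿ such that the rigid motion σ' = (θ,ξ') satisfies σ'(A) ⊆ [0, min{b_1, diam A}] × ⋯ × [0, min{b_n, diam A}]. -/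
/-!
In each coordinate `m`, slide the image `θA` so that the infimum of its `m`-th coordinates becomes
`0`; the translation is `ξ' m = -inf {(θx)_m : x ∈ A}`. The largest `m`-th coordinate is then the
width of `θA` in direction `m`. This width is at most `b m`, since a translate of `θA` lies
in the brick, and at most `diam A`, since `θ` is an isometry and a coordinate of a vector is bounded
by its Euclidean norm (`mulVec_sub_le_dist`).
-/

noncomputable section

/-- The brick `[0, b 1] × ⋯ × [0, b n]` in `ℝⁿ`. -/
def brick0 {n : ℕ} (b : Fin n → ℝ) : Set (EuclideanSpace ℝ (Fin n)) :=
  {x | ∀ m, x m ∈ Set.Icc 0 (b m)}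

/-- An orthogonal map followed by a coordinate projection does not increase distances. -/
theorem mulVec_sub_le_dist {n : ℕ} {θ : Matrix (Fin n) (Fin n) ℝ}
    (hθ : θ ∈ Matrix.orthogonalGroup (Fin n) ℝ) (x y : EuclideanSpace ℝ (Fin n)) (m : Fin n) :
    θ.mulVec x.ofLp m - θ.mulVec y.ofLp m ≤ dist x y := by
  have hT : θ.transpose * θ = 1 := by
    simpa [Matrix.star_eq_conjTranspose] using (Matrix.mem_orthogonalGroup_iff' (Fin n) ℝ).1 hθ
  have hdot : ∀ v : Fin n → ℝ, θ.mulVec v ⬝ᵥ θ.mulVec v = v ⬝ᵥ v := by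
    intro v
    rw [Matrix.dotProduct_mulVec, Matrix.vecMul_mulVec, hT, Matrix.vecMul_one]
  have hcoord : (θ.mulVec (x.ofLp - y.ofLp) m) ^ 2 ≤ dist x y ^ 2 := by
    calc (θ.mulVec (x.ofLp - y.ofLp) m) ^ 2
        ≤ ∑ i, (θ.mulVec (x.ofLp - y.ofLp) i) ^ 2 :=
          Finset.single_le_sum (f := fun i => (θ.mulVec (x.ofLp - y.ofLp) i) ^ 2)
            (fun i _ => sq_nonneg _) (Finset.mem_univ m)
      _ = dist x y ^ 2 := by
          have := hdot (x.ofLp - y.ofLp)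
          simp only [dotProduct, ← sq] at this
          rw [this, dist_eq_norm, EuclideanSpace.norm_sq_eq]
          simp
  have := abs_le_of_sq_le_sq hcoord dist_nonneg
  rw [Matrix.mulVec_sub] at this
  exact le_of_abs_le this

/-- **Repositioning step in Case 2 of the proof of Theorem 2.** If `A ⊆ ℝⁿ` contains the
origin and is bounded (so that its diameter is finite), and the rigid motion `σ = (θ, ξ)`
carries `A` into the brick `[0, b 1] × ⋯ × [0, b n]`, then some rigid motion
`σ' = (θ, ξ')` with the same orthogonal part carries `A` into the smaller brick
`[0, min (b 1) (diam A)] × ⋯ × [0, min (b n) (diam A)]`. -/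
theorem reposition_into_small_brick {n : ℕ} (A : Set (EuclideanSpace ℝ (Fin n)))
    (h0 : (0 : EuclideanSpace ℝ (Fin n)) ∈ A) (hA : Bornology.IsBounded A)
    (b : Fin n → ℝ)
    (θ : Matrix (Fin n) (Fin n) ℝ) (hθ : θ ∈ Matrix.orthogonalGroup (Fin n) ℝ)
    (ξ : EuclideanSpace ℝ (Fin n))
    (h : rmApply θ ξ '' A ⊆ brick0 b) :
    ∃ ξ' : EuclideanSpace ℝ (Fin n),
      rmApply θ ξ' '' A ⊆ brick0 (fun m => min (b m) (Metric.diam A)) := by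
  have hb : ∀ x ∈ A, ∀ m, 0 ≤ ξ m + θ.mulVec x.ofLp m ∧ ξ m + θ.mulVec x.ofLp m ≤ b m :=
    fun x hx m => h ⟨x, hx, rfl⟩ m
  refine ⟨WithLp.toLp 2 fun m => -sInf ((fun x => θ.mulVec x.ofLp m) '' A), ?_⟩
  rintro _ ⟨x, hx, rfl⟩ m
  have hlow : sInf ((fun x => θ.mulVec x.ofLp m) '' A) ≤ θ.mulVec x.ofLp m := by
    refine csInf_le ⟨-ξ m, ?_⟩ ⟨x, hx, rfl⟩
    rintro _ ⟨y, hy, rfl⟩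
    have := (hb y hy m).1
    dsimp only
    linarith
  have hbrick : θ.mulVec x.ofLp m - b m ≤ sInf ((fun x => θ.mulVec x.ofLp m) '' A) := by
    refine le_csInf ⟨_, 0, h0, rfl⟩ ?_
    rintro _ ⟨y, hy, rfl⟩
    have h1 := (hb y hy m).1
    have h2 := (hb x hx m).2
    dsimp only
    linarith
  have hdiam : θ.mulVec x.ofLp m - Metric.diam A ≤
      sInf ((fun x => θ.mulVec x.ofLp m) '' A) := by
    refine le_csInf ⟨_, 0, h0, rfl⟩ ?_
    rintro _ ⟨y, hy, rfl⟩
    have h1 := mulVec_sub_le_dist hθ x y m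
    have h2 := Metric.dist_le_diam_of_mem hA hx hy
    dsimp only
    linarith
  change 0 ≤ -sInf ((fun x => θ.mulVec x.ofLp m) '' A) + θ.mulVec x.ofLp m ∧
    -sInf ((fun x => θ.mulVec x.ofLp m) '' A) + θ.mulVec x.ofLp m ≤ min (b m) (Metric.diam A)
  exact ⟨by linarith, le_min (by linarith) (by linarith)⟩
end
end
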